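/- Let R be a polynomial ring over an algebraically closed field K. Let I be an ideal minimally generated by n quadrics represented by minors by the 2×(n+1) matrix M = [[x, 0, a_{12}, a_{13}, …, a_{1n}], [y, a_{21}, a_{22}, a_{23}, …, a_{2n}]], where all entries are linear forms or zero, x and y are linearly independent, and the submatrix D = [[x, a_{12}, …, a_{1n}], [y, a_{22}, …, a_{2n}]] obtained by deleting the second column is 1-generic. Then pd(R/I) ≤ n. -/

import Mathlib

open MvPolynomial Filter

universe u

/-- `PdLE R n M` means the `R`-module `M` has projective dimension at most `n`:
either `M` is projective (`n = 0`), or `M` is a quotient of a free module by a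
submodule of projective dimension at most `n - 1`. -/
def PdLE (R : Type u) [CommRing R] : ℕ → (M : Type u) → [AddCommGroup M] → [Module R M] → Prop
  | 0, M, _, _ => Module.Projective R M
  | n + 1, M, _, _ => ∃ (F : Type u) (_ : AddCommGroup F) (_ : Module R F),
      Module.Free R F ∧ ∃ f : F →ₗ[R] M, Function.Surjective f ∧ PdLE R n (LinearMap.ker f)

/-- The projective dimension of an `R`-module `M`, as an element of `ℕ∞`
(`⊤` if `M` has no finite free resolution). -/
noncomputable def projDim (R : Type u) [CommRing R] (M : Type u) [AddCommGroup M]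
    [Module R M] : ℕ∞ :=
  sInf ((fun n : ℕ => (n : ℕ∞)) '' {n : ℕ | PdLE R n M})

/-- The height of an ideal: the infimum of the heights of the prime ideals containing it. -/
noncomputable def idealHeight {R : Type*} [CommRing R] (I : Ideal R) : ℕ∞ :=
  ⨅ p ∈ {p : PrimeSpectrum R | I ≤ p.asIdeal}, Order.height p

/-- The length of a module, defined as the Krull dimension of its lattice of submodules. -/
noncomputable def moduleLength (R : Type u) [CommRing R] (M : Type u) [AddCommGroup M]
    [Module R M] : WithBot ℕ∞ :=
  Order.krullDim (Submodule R M)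

/-- `IsHSMultiplicity R mx I e` asserts that the Hilbert–Samuel multiplicity of `R/I`
with respect to the ideal `mx` equals `e`: for `d = dim R/I` there is a polynomial `P`
of degree `d` with `e = d! · (leading coefficient of P)` such that
`length (R/(I + mx^n)) = P(n)` for all large `n`. -/
def IsHSMultiplicity (R : Type u) [CommRing R] (mx I : Ideal R) (e : ℕ) : Prop :=
  ∃ (d : ℕ) (P : Polynomial ℚ),
    ringKrullDim (R ⧸ I) = (d : WithBot ℕ∞) ∧
    P.natDegree = d ∧
    (e : ℚ) = P.leadingCoeff * d.factorial ∧
    ∀ᶠ n : ℕ in Filter.atTop, ∃ k : ℕ, (k : ℚ) = P.eval (n : ℚ) ∧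
      moduleLength R (R ⧸ (I ⊔ mx ^ n)) = ((k : ℕ∞) : WithBot ℕ∞)

/-- A matrix over a `K`-algebra is `1`-generic if it has no generalized zero entry:
for every nonzero vectors `u`, `v` of scalars, `uᵀ M v ≠ 0`. -/
def OneGeneric (K : Type*) [Field K] {R : Type u} [CommRing R] [Algebra K R]
    {m l : ℕ} (M : Matrix (Fin m) (Fin l) R) : Prop :=
  ∀ (u : Fin m → K) (v : Fin l → K), u ≠ 0 → v ≠ 0 →
    ∑ i, ∑ j, algebraMap K R (u i * v j) * M i j ≠ 0

/-- The ideal of all `2 × 2` minors of a `2 × l` matrix. -/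
def minors2 {R : Type u} [CommRing R] {l : ℕ} (M : Matrix (Fin 2) (Fin l) R) : Ideal R :=
  Ideal.span (Set.range fun p : Fin l × Fin l => M 0 p.1 * M 1 p.2 - M 0 p.2 * M 1 p.1)

/-- The homogeneous maximal ideal of a polynomial ring. -/
noncomputable def maxIdeal (K : Type*) [Field K] (σ : Type*) : Ideal (MvPolynomial σ K) :=
  Ideal.span (Set.range (X : σ → MvPolynomial σ K))

/-- The ideal represented by minors by the `2 × (n+1)` matrix with first column `(x, y)ᵀ`
and remaining columns `(u j, v j)ᵀ`: it is generated by the `2 × 2` minors involving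
the first column. -/
def repByMinors {R : Type u} [CommRing R] {n : ℕ} (x y : R) (u v : Fin n → R) : Ideal R :=
  Ideal.span (Set.range fun j : Fin n => x * v j - y * u j)

section PD
open CategoryTheory

variable {R : Type u} [CommRing R]

/-- auxiliary: projective dimension bound through Mathlib's notion. -/
def PD (R : Type u) [CommRing R] (n : ℕ) (M : Type u) [AddCommGroup M] [Module R M] : Prop :=
  HasProjectiveDimensionLT (ModuleCat.of R M) (n + 1)

lemma ses_exact {M N Q : Type u} [AddCommGroup M] [Module R M] [AddCommGroup N] [Module R N]
    [AddCommGroup Q] [Module R Q] (f : M →ₗ[R] N) (g : N →ₗ[R] Q)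
    (hf : Function.Injective f) (hg : Function.Surjective g) (hfg : Function.Exact f g) :
    (ShortComplex.mk (ModuleCat.ofHom f) (ModuleCat.ofHom g)
      (by ext x; exact hfg.apply_apply_eq_zero x)).ShortExact where
  exact := (ShortComplex.ShortExact.moduleCat_exact_iff_function_exact _).mpr hfg
  mono_f := (ModuleCat.mono_iff_injective _).2 hf
  epi_g := (ModuleCat.epi_iff_surjective _).2 hg

lemma ses_ker {N Q : Type u} [AddCommGroup N] [Module R N]
    [AddCommGroup Q] [Module R Q] (g : N →ₗ[R] Q) (hg : Function.Surjective g) :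
    (ShortComplex.mk (ModuleCat.ofHom (LinearMap.ker g).subtype) (ModuleCat.ofHom g)
      (by ext x; exact x.2)).ShortExact :=
  ses_exact (LinearMap.ker g).subtype g (Submodule.subtype_injective _) hg
    (LinearMap.exact_subtype_ker_map g)

lemma PD.pdLE : ∀ (n : ℕ) (M : Type u) [AddCommGroup M] [Module R M], PD R n M → PdLE R n M
  | 0, M, _, _, h => by
    have h' : HasProjectiveDimensionLT (ModuleCat.of R M) 1 := h
    rw [← projective_iff_hasProjectiveDimensionLT_one, ← IsProjective.iff_projective] at h'
    exact h'
  | n + 1, M, _, _, h => by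
    refine ⟨M →₀ R, inferInstance, inferInstance, inferInstance,
      Finsupp.linearCombination R (id : M → M), Finsupp.linearCombination_id_surjective R M, ?_⟩
    apply PD.pdLE
    have := ses_ker (Finsupp.linearCombination R (id : M → M))
      (Finsupp.linearCombination_id_surjective R M)
    have hp : Projective (ModuleCat.of R (M →₀ R)) := by
      rw [← IsProjective.iff_projective]; infer_instance
    exact this.hasProjectiveDimensionLT_X₁ (n + 1)
      (hasProjectiveDimensionLT_of_ge (ModuleCat.of R (M →₀ R)) 1 (n+1) (by omega)) h

lemma PD.mono {n k : ℕ} (hnk : n ≤ k) {M : Type u} [AddCommGroup M] [Module R M] (h : PD R n M) :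
    PD R k M := by
  have : HasProjectiveDimensionLT (ModuleCat.of R M) (n+1) := h
  exact hasProjectiveDimensionLT_of_ge (ModuleCat.of R M) (n+1) (k+1) (by omega)

lemma PD.bot : PD R 0 (R ⧸ (⊥ : Ideal R)) := by
  have : Module.Projective R (R ⧸ (⊥ : Ideal R)) :=
    Module.Projective.of_equiv (Submodule.quotEquivOfEqBot (⊥ : Ideal R) rfl).symm
  have hp : Projective (ModuleCat.of R (R ⧸ (⊥ : Ideal R))) := by
    rw [← IsProjective.iff_projective]; infer_instance
  show HasProjectiveDimensionLT _ 1
  infer_instance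

/-- The short exact sequence `0 → R/(I:x) → R/I → R/(I+x) → 0`. -/
lemma ses_colon (I J I' : Ideal R) (x : R) (hJ : ∀ f, f ∈ J ↔ x * f ∈ I)
    (hI' : I' = I ⊔ Ideal.span {x}) :
    ∃ (f : (R ⧸ J) →ₗ[R] (R ⧸ I)) (g : (R ⧸ I) →ₗ[R] (R ⧸ I')),
      Function.Injective f ∧ Function.Surjective g ∧ Function.Exact f g := by
  subst hI'
  have hle : J ≤ Submodule.comap (LinearMap.mulLeft R x) I := fun f hf => (hJ f).1 hf
  have hφ : ∀ a : R, Submodule.mapQ J I (LinearMap.mulLeft R x) hle (Submodule.Quotient.mk a)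
    = Submodule.Quotient.mk (x * a) := fun a => rfl
  refine ⟨Submodule.mapQ J I (LinearMap.mulLeft R x) hle,
    Submodule.factor le_sup_left, ?_, Submodule.factor_surjective _, ?_⟩
  · rw [← LinearMap.ker_eq_bot, LinearMap.ker_eq_bot']
    intro a ha
    obtain ⟨a, rfl⟩ := Submodule.mkQ_surjective J a
    rw [Submodule.mkQ_apply, hφ, Submodule.Quotient.mk_eq_zero] at ha
    rw [Submodule.mkQ_apply, Submodule.Quotient.mk_eq_zero]
    exact (hJ a).2 ha
  · intro a
    obtain ⟨a, rfl⟩ := Submodule.mkQ_surjective I a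
    rw [Submodule.mkQ_apply]
    change (Submodule.Quotient.mk a : R ⧸ (I ⊔ Ideal.span {x})) = 0 ↔ _
    rw [Submodule.Quotient.mk_eq_zero]
    constructor
    · intro h
      obtain ⟨i, hi, z, hz, rfl⟩ := Submodule.mem_sup.1 h
      obtain ⟨c, rfl⟩ := Ideal.mem_span_singleton'.1 hz
      refine ⟨Submodule.Quotient.mk c, ?_⟩
      rw [hφ, eq_comm, Submodule.Quotient.eq]
      simpa [mul_comm] using hi
    · rintro ⟨c, hc⟩
      obtain ⟨c, rfl⟩ := Submodule.mkQ_surjective J c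
      rw [Submodule.mkQ_apply, hφ, eq_comm, Submodule.Quotient.eq] at hc
      have : a = (a - x * c) + x * c := by ring
      rw [this]
      exact Submodule.add_mem_sup hc (Ideal.mul_mem_right _ _ (Ideal.mem_span_singleton_self x))

lemma PD.colon₂ {I J I' : Ideal R} {x : R} (hJ : ∀ f, f ∈ J ↔ x * f ∈ I)
    (hI' : I' = I ⊔ Ideal.span {x}) {n : ℕ} (h1 : PD R n (R ⧸ J)) (h3 : PD R n (R ⧸ I')) :
    PD R n (R ⧸ I) := by
  obtain ⟨f, g, hf, hg, hfg⟩ := ses_colon I J I' x hJ hI'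
  exact (ses_exact f g hf hg hfg).hasProjectiveDimensionLT_X₂ (n+1) h1 h3

lemma PD.colon₁ {I J I' : Ideal R} {x : R} (hJ : ∀ f, f ∈ J ↔ x * f ∈ I)
    (hI' : I' = I ⊔ Ideal.span {x}) {n : ℕ} (h2 : PD R n (R ⧸ I)) (h3 : PD R (n+1) (R ⧸ I')) :
    PD R n (R ⧸ J) := by
  obtain ⟨f, g, hf, hg, hfg⟩ := ses_colon I J I' x hJ hI'
  exact (ses_exact f g hf hg hfg).hasProjectiveDimensionLT_X₁ (n+1) h2 h3

lemma PD.nzd {I I' : Ideal R} {x : R} (hJ : ∀ f, x * f ∈ I → f ∈ I)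
    (hI' : I' = I ⊔ Ideal.span {x}) {n : ℕ} (h1 : PD R n (R ⧸ I)) :
    PD R (n+1) (R ⧸ I') := by
  obtain ⟨f, g, hf, hg, hfg⟩ := ses_colon I I I' x
    (fun f => ⟨fun h => Ideal.mul_mem_left _ _ h, hJ f⟩) hI'
  exact (ses_exact f g hf hg hfg).hasProjectiveDimensionLT_X₃ (n+1) h1 (PD.mono (Nat.le_succ _) h1)

end PD

section LinForms

/-- linear form with given coefficient vector -/
noncomputable def Lf (A : Type u) [CommRing A] (N : ℕ) :
    (Fin N → A) →ₗ[A] MvPolynomial (Fin N) A :=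
  Fintype.linearCombination A (fun i => (X i : MvPolynomial (Fin N) A))

lemma Lf_apply {A : Type u} [CommRing A] {N : ℕ} (w : Fin N → A) :
    Lf A N w = ∑ i, C (w i) * X i := by
  simp [Lf, Fintype.linearCombination_apply, MvPolynomial.smul_eq_C_mul]

lemma Lf_single {A : Type u} [CommRing A] {N : ℕ} (i : Fin N) :
    Lf A N (Pi.single i 1) = X i := by
  simp [Lf, Fintype.linearCombination_apply_single]

lemma coeff_Lf {A : Type u} [CommRing A] {N : ℕ} (w : Fin N → A) (i : Fin N) :
    coeff (Finsupp.single i 1) (Lf A N w) = w i := by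
  classical
  rw [Lf_apply, MvPolynomial.coeff_sum]
  simp [coeff_C_mul, coeff_X, Finsupp.single_left_inj]

lemma Lf_injective {A : Type u} [CommRing A] {N : ℕ} : Function.Injective (Lf A N) := by
  intro v w h
  ext i
  rw [← coeff_Lf v i, h, coeff_Lf]

lemma exists_Lf {A : Type u} [CommRing A] {N : ℕ} (f : MvPolynomial (Fin N) A)
    (hf : f.IsHomogeneous 1) : ∃ w, Lf A N w = f := by
  have : f ∈ homogeneousSubmodule (Fin N) A 1 := hf
  rw [homogeneousSubmodule_one_eq_span_X, Submodule.mem_span_range_iff_exists_fun] at this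
  obtain ⟨c, hc⟩ := this
  exact ⟨c, by rw [← hc, Lf, Fintype.linearCombination_apply]⟩

lemma Lf_ideal {A : Type u} [CommRing A] [IsDomain A] {N : ℕ} (W : Submodule A (Fin N → A))
    [Module.Projective A ((Fin N → A) ⧸ W)] :
    (Ideal.span (Lf A N '' W)).IsPrime ∧ ∀ w, Lf A N w ∈ Ideal.span (Lf A N '' W) → w ∈ W := by
  obtain ⟨s, hs⟩ := Module.projective_lifting_property W.mkQ LinearMap.id W.mkQ_surjective
  have hs' : ∀ q, W.mkQ (s q) = q := fun q => LinearMap.congr_fun hs q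
  let π := s ∘ₗ W.mkQ
  let φ : MvPolynomial (Fin N) A →ₐ[A] MvPolynomial (Fin N) A :=
    aeval (fun i => Lf A N (π (Pi.single i 1)))
  have hφ : ∀ w, φ (Lf A N w) = Lf A N (π w) := by
    intro w
    have : φ.toLinearMap ∘ₗ Lf A N = Lf A N ∘ₗ π := by
      apply LinearMap.pi_ext'
      intro i
      ext
      simp [Lf_single, φ]
    exact LinearMap.congr_fun this w
  have hπ : ∀ w, w - π w ∈ W := by
    intro w
    rw [← Submodule.Quotient.mk_eq_zero, ← Submodule.mkQ_apply, map_sub]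
    simp only [π, LinearMap.comp_apply, hs', sub_self]
  have hπW : ∀ w, π w = 0 ↔ w ∈ W := by
    intro w
    constructor
    · intro h
      simpa [h] using hπ w
    · intro h
      have : W.mkQ w = 0 := by simpa using h
      simp [π, this]
  have hsub : ∀ f, f - φ f ∈ Ideal.span (Lf A N '' W) := by
    intro f
    induction f using MvPolynomial.induction_on with
    | C a => simp [φ]
    | add p q hp hq =>
      rw [map_add, add_sub_add_comm]
      exact Ideal.add_mem _ hp hq
    | mul_X p i hp =>
      have h1 : (X i - φ (X i) : MvPolynomial (Fin N) A) ∈ Ideal.span (Lf A N '' W) := by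
        rw [← Lf_single, hφ, ← map_sub]
        exact Ideal.subset_span ⟨_, hπ _, rfl⟩
      have : p * X i - φ (p * X i) = (p - φ p) * X i + φ p * (X i - φ (X i)) := by
        rw [map_mul]; ring
      rw [this]
      exact Ideal.add_mem _ (Ideal.mul_mem_right _ _ hp) (Ideal.mul_mem_left _ _ h1)
  have hker : Ideal.span (Lf A N '' W) = RingHom.ker φ := by
    apply le_antisymm
    · rw [Ideal.span_le]
      rintro _ ⟨w, hw, rfl⟩
      simp only [SetLike.mem_coe, RingHom.mem_ker]
      rw [hφ, (hπW w).2 hw, map_zero]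
    · intro f hf
      have := hsub f
      rwa [(RingHom.mem_ker).1 hf, sub_zero] at this
  constructor
  · rw [hker]
    exact RingHom.ker_isPrime _
  · intro w hw
    rw [hker, RingHom.mem_ker, hφ] at hw
    rw [← hπW]
    exact Lf_injective (by rw [hw, map_zero])

lemma span_Lf {A : Type u} [CommRing A] {N : ℕ} {ι : Type*} (α : ι → Fin N → A) :
    Ideal.span (Lf A N '' (Submodule.span A (Set.range α) : Set (Fin N → A))) =
      Ideal.span (Set.range fun j => Lf A N (α j)) := by
  apply le_antisymm
  · rw [Ideal.span_le]
    rintro _ ⟨w, hw, rfl⟩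
    induction hw using Submodule.span_induction with
    | mem x h =>
      obtain ⟨j, rfl⟩ := h
      exact Ideal.subset_span ⟨j, rfl⟩
    | zero => simp
    | add x y _ _ hx hy =>
      rw [map_add]
      exact Ideal.add_mem _ hx hy
    | smul a x _ hx =>
      rw [map_smul, MvPolynomial.smul_eq_C_mul]
      exact Ideal.mul_mem_left _ _ hx
  · apply Ideal.span_mono
    rintro _ ⟨j, rfl⟩
    exact ⟨_, Submodule.subset_span ⟨j, rfl⟩, rfl⟩

lemma span_snoc {R : Type u} [CommRing R] {q : ℕ} (a : Fin (q+1) → R) :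
    Ideal.span (Set.range a) =
      Ideal.span (Set.range fun j : Fin q => a j.castSucc) ⊔ Ideal.span {a (Fin.last q)} := by
  rw [← Ideal.span_union]
  congr 1
  ext z
  simp only [Set.mem_range, Set.mem_union, Set.mem_singleton_iff]
  constructor
  · rintro ⟨j, rfl⟩
    induction j using Fin.lastCases with
    | last => right; rfl
    | cast j => left; exact ⟨j, rfl⟩
  · rintro (⟨j, rfl⟩ | rfl)
    · exact ⟨_, rfl⟩
    · exact ⟨_, rfl⟩

variable {K : Type u} [Field K] {N : ℕ}

lemma prime_lin {ι : Type*} (α : ι → Fin N → K) :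
    (Ideal.span (Set.range fun j => Lf K N (α j))).IsPrime := by
  rw [← span_Lf]; exact (Lf_ideal _).1

lemma mem_lin {ι : Type*} (α : ι → Fin N → K) (w : Fin N → K)
    (h : Lf K N w ∈ Ideal.span (Set.range fun j => Lf K N (α j))) :
    w ∈ Submodule.span K (Set.range α) := by
  rw [← span_Lf] at h; exact (Lf_ideal _).2 w h

lemma li_init {A M : Type*} [Ring A] [AddCommGroup M] [Module A M] {q : ℕ}
    {α : Fin (q+1) → M} (h : LinearIndependent A α) :
    LinearIndependent A (fun j : Fin q => α j.castSucc) :=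
  h.comp _ (Fin.castSucc_injective q)

lemma li_last {q : ℕ}
    {α : Fin (q+1) → Fin N → K} (h : LinearIndependent K α) :
    α (Fin.last q) ∉ Submodule.span K (Set.range fun j : Fin q => α j.castSucc) := by
  have := h.notMem_span_image (s := Set.range Fin.castSucc) (x := Fin.last q)
    (by rintro ⟨j, hj⟩; exact Fin.castSucc_ne_last j hj)
  rwa [← Set.range_comp] at this

lemma reg_lin {q : ℕ}
    {α : Fin (q+1) → Fin N → K} (h : LinearIndependent K α) (f : MvPolynomial (Fin N) K)
    (hf : Lf K N (α (Fin.last q)) * f ∈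
      Ideal.span (Set.range fun j : Fin q => Lf K N (α j.castSucc))) :
    f ∈ Ideal.span (Set.range fun j : Fin q => Lf K N (α j.castSucc)) := by
  rcases (prime_lin (fun j : Fin q => α j.castSucc)).mem_or_mem hf with h1 | h1
  · exact absurd (mem_lin _ _ h1) (li_last h)
  · exact h1

lemma PD_lin (q : ℕ) (α : Fin q → Fin N → K) (h : LinearIndependent K α) :
    PD (MvPolynomial (Fin N) K) q
      (MvPolynomial (Fin N) K ⧸ Ideal.span (Set.range fun j => Lf K N (α j))) := by
  induction q with
  | zero =>
    have : Ideal.span (Set.range fun j => Lf K N (α j)) = ⊥ := by simp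
    rw [this]
    exact PD.bot
  | succ q ih => 
    have h1 := span_snoc (fun j => Lf K N (α j))
    have h2 := ih (fun j => α j.castSucc) (li_init h)
    exact PD.nzd (reg_lin h) h1 h2

/-- `a` has only Koszul syzygies -/
def KosOne {R : Type u} [CommRing R] {q : ℕ} (a : Fin q → R) : Prop :=
  ∀ g : Fin q → R, ∑ j, g j * a j = 0 →
    ∃ h : Fin q → Fin q → R, ∀ j, g j = ∑ i, (h i j - h j i) * a i

lemma koszul_step {R : Type u} [CommRing R] {q : ℕ} (a : Fin (q+1) → R)
    (hreg : ∀ f, a (Fin.last q) * f ∈ Ideal.span (Set.range fun j : Fin q => a j.castSucc) →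
      f ∈ Ideal.span (Set.range fun j : Fin q => a j.castSucc))
    (ih : KosOne (fun j : Fin q => a j.castSucc)) : KosOne a := by
  intro g hg
  rw [Fin.sum_univ_castSucc] at hg
  have h1 : a (Fin.last q) * g (Fin.last q) ∈
      Ideal.span (Set.range fun j : Fin q => a j.castSucc) := by
    have : a (Fin.last q) * g (Fin.last q) =
      - ∑ j : Fin q, g j.castSucc * a j.castSucc := by linear_combination hg
    rw [this]
    exact neg_mem (sum_mem fun j _ => Ideal.mul_mem_left _ _ (Ideal.subset_span ⟨j, rfl⟩))
  obtain ⟨r, hr⟩ := (Ideal.mem_span_range_iff_exists_fun).1 (hreg _ h1)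
  obtain ⟨h, hh⟩ := ih
    (fun j => g j.castSucc + r j * a (Fin.last q)) (by
      simp only [add_mul, Finset.sum_add_distrib]
      rw [← hg, ← hr, Finset.sum_mul]
      congr 1
      exact Finset.sum_congr rfl fun j _ => by ring)
  let h' : Fin (q+1) → Fin (q+1) → R := fun i j =>
    Fin.lastCases (motive := fun _ => R)
      (Fin.lastCases (motive := fun _ => R) 0 (fun j => - r j) j)
      (fun i => Fin.lastCases (motive := fun _ => R) 0 (fun j => h i j) j) i
  have e1 : ∀ i j : Fin q, h' i.castSucc j.castSucc = h i j := fun i j => by simp [h']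
  have e2 : ∀ j : Fin q, h' (Fin.last q) j.castSucc = - r j := fun j => by simp [h']
  have e3 : ∀ j : Fin q, h' j.castSucc (Fin.last q) = 0 := fun j => by simp [h']
  refine ⟨h', fun j => ?_⟩
  rw [Fin.sum_univ_castSucc]
  induction j using Fin.lastCases with
  | last =>
    simp only [e2, e3, sub_self, zero_mul, add_zero, zero_sub, neg_neg]
    exact hr.symm
  | cast j =>
    have := hh j
    simp only [e1, e2, e3]
    linear_combination this

lemma koszul_lin (q : ℕ) (α : Fin q → Fin N → K) (h : LinearIndependent K α) :
    KosOne (fun j => Lf K N (α j)) := by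
  induction q with
  | zero => exact fun g _ => ⟨0, fun j => j.elim0⟩
  | succ q ih => exact koszul_step (fun j => Lf K N (α j)) (reg_lin h) (ih _ (li_init h))

end LinForms

section Scroll

/-- ideal of all 2-minors -/
def Pm {R : Type u} [CommRing R] {q : ℕ} (a c : Fin q → R) : Ideal R :=
  Ideal.span (Set.range fun p : Fin q × Fin q => a p.1 * c p.2 - a p.2 * c p.1)

lemma minor_mem {R : Type u} [CommRing R] {q : ℕ} (a c : Fin q → R) (i j : Fin q) :
    a i * c j - a j * c i ∈ Pm a c := Ideal.subset_span ⟨(i, j), rfl⟩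

lemma reduce {R : Type u} [CommRing R] {q : ℕ} (a c : Fin q → R) (ha : KosOne a) (f : R) (d : ℕ) :
    ∀ g : Fin q → Polynomial R, (∀ j, (g j).natDegree ≤ d) →
      ∑ j, g j * (Polynomial.C (c j) - Polynomial.X * Polynomial.C (a j)) = Polynomial.C f →
      f ∈ Pm a c := by
  induction d with
  | zero =>
    intro g hd hg
    have hC : ∀ j, g j = Polynomial.C ((g j).coeff 0) := fun j =>
      Polynomial.eq_C_of_natDegree_le_zero (hd j)
    have h0 : ∑ j, (g j).coeff 0 * c j = f := by
      have := congrArg (fun p => Polynomial.coeff p 0) hg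
      simp only [Polynomial.finsetSum_coeff, Polynomial.mul_coeff_zero] at this
      simpa using this
    have h1 : ∑ j, (g j).coeff 0 * a j = 0 := by
      have := congrArg (fun p => Polynomial.coeff p 1) hg
      simp only [Polynomial.finsetSum_coeff] at this
      have h2 : ∀ j, (g j * (Polynomial.C (c j) - Polynomial.X * Polynomial.C (a j))).coeff 1
          = - ((g j).coeff 0 * a j) := by
        intro j
        rw [hC j]
        simp [Polynomial.coeff_C_mul, Polynomial.coeff_C]
      simp only [h2, Finset.sum_neg_distrib] at this
      simpa [Polynomial.coeff_C] using this
    obtain ⟨h, hh⟩ := ha _ h1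
    rw [← h0]
    have : ∑ j, (g j).coeff 0 * c j = ∑ j, ∑ i, h i j * (a i * c j - a j * c i) := by
      have e1 : ∑ j, (g j).coeff 0 * c j =
          ∑ j, ∑ i, h i j * (a i * c j) - ∑ j, ∑ i, h j i * (a i * c j) := by
        rw [← Finset.sum_sub_distrib]
        refine Finset.sum_congr rfl fun j _ => ?_
        rw [hh j, Finset.sum_mul, ← Finset.sum_sub_distrib]
        refine Finset.sum_congr rfl fun i _ => by ring
      rw [e1, Finset.sum_comm (f := fun j i => h j i * (a i * c j)), ← Finset.sum_sub_distrib]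
      refine Finset.sum_congr rfl fun j _ => ?_
      rw [← Finset.sum_sub_distrib]
      refine Finset.sum_congr rfl fun i _ => by ring
    rw [this]
    exact sum_mem fun j _ => sum_mem fun i _ => Ideal.mul_mem_left _ _ (minor_mem a c i j)
  | succ d ih =>
    intro g hd hg
    have h1 : ∑ j, (g j).coeff (d+1) * a j = 0 := by
      have := congrArg (fun p => Polynomial.coeff p (d+2)) hg
      simp only [Polynomial.finsetSum_coeff] at this
      have h2 : ∀ j, (g j * (Polynomial.C (c j) - Polynomial.X * Polynomial.C (a j))).coeff (d+2)
          = - ((g j).coeff (d+1) * a j) := by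
        intro j
        have h3 : (g j).coeff (d+2) = 0 :=
          Polynomial.coeff_eq_zero_of_natDegree_lt (by have := hd j; omega)
        rw [mul_sub, Polynomial.coeff_sub, Polynomial.coeff_mul_C, h3, ← mul_assoc,
          Polynomial.coeff_mul_C, Polynomial.coeff_mul_X]
        ring
      simp only [h2, Finset.sum_neg_distrib] at this
      simpa [Polynomial.coeff_C] using this
    obtain ⟨h, hh⟩ := ha _ h1
    let ℓ : Fin q → Polynomial R := fun j => Polynomial.C (c j) - Polynomial.X * Polynomial.C (a j)
    let k : Fin q → Polynomial R := fun j => ∑ i, Polynomial.C (h i j - h j i) * ℓ i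
    have hk0 : ∑ j, k j * ℓ j = 0 := by
      have e1 : ∑ j, k j * ℓ j =
          ∑ j, ∑ i, Polynomial.C (h i j) * (ℓ i * ℓ j)
          - ∑ j, ∑ i, Polynomial.C (h j i) * (ℓ i * ℓ j) := by
        rw [← Finset.sum_sub_distrib]
        refine Finset.sum_congr rfl fun j _ => ?_
        rw [Finset.sum_mul, ← Finset.sum_sub_distrib]
        refine Finset.sum_congr rfl fun i _ => by rw [Polynomial.C_sub]; ring
      rw [e1, Finset.sum_comm, sub_eq_zero]
      refine Finset.sum_congr rfl fun j _ => Finset.sum_congr rfl fun i _ => by ring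
    have hk : ∀ j, k j = Polynomial.C (∑ i, (h i j - h j i) * c i)
        - Polynomial.C ((g j).coeff (d+1)) * Polynomial.X := by
      intro j
      rw [hh j, map_sum, map_sum, Finset.sum_mul, ← Finset.sum_sub_distrib]
      refine Finset.sum_congr rfl fun i _ => ?_
      simp only [ℓ, Polynomial.C_mul]
      ring
    apply ih (fun j => g j + Polynomial.X ^ d * k j)
    · intro j
      rw [Polynomial.natDegree_le_iff_coeff_eq_zero]
      intro n hn
      have e5 : g j + Polynomial.X ^ d * k j =
          g j + (Polynomial.X ^ d * Polynomial.C (∑ i, (h i j - h j i) * c i)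
            - Polynomial.C ((g j).coeff (d+1)) * Polynomial.X ^ (d+1)) := by
        rw [hk j]; ring
      rw [e5, Polynomial.coeff_add, Polynomial.coeff_sub, Polynomial.coeff_mul_C,
        Polynomial.coeff_X_pow, if_neg (by omega), Polynomial.coeff_C_mul,
        Polynomial.coeff_X_pow]
      split_ifs with h5
      · subst h5; ring
      · rw [Polynomial.coeff_eq_zero_of_natDegree_lt]
        · ring
        · have := hd j; omega
    · rw [← hg]
      have : ∑ j, (g j + Polynomial.X ^ d * k j) * ℓ j
          = ∑ j, g j * ℓ j + Polynomial.X ^ d * ∑ j, k j * ℓ j := by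
        rw [Finset.mul_sum, ← Finset.sum_add_distrib]
        refine Finset.sum_congr rfl fun i _ => by ring
      rw [hk0, mul_zero, add_zero] at this
      exact this

variable {K : Type u} [Field K] {N : ℕ}

/-- exchange of variables -/
noncomputable def exch (K : Type u) [Field K] (N : ℕ) :
    Polynomial (MvPolynomial (Fin N) K) ≃ₐ[K] MvPolynomial (Fin N) (Polynomial K) :=
  (optionEquivLeft K (Fin N)).symm.trans (optionEquivRight K (Fin N))

lemma exch_X : exch K N Polynomial.X = C Polynomial.X := by
  simp [exch]

lemma exch_C_X (i : Fin N) : exch K N (Polynomial.C (X i)) = X i := by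
  simp [exch]

lemma exch_C_C (r : K) : exch K N (Polynomial.C (C r)) = C (Polynomial.C r) := by
  have : (Polynomial.C (C r) : Polynomial (MvPolynomial (Fin N) K)) = algebraMap K _ r := rfl
  rw [this, AlgEquiv.commutes]; rfl

lemma exch_Lf (w : Fin N → K) :
    exch K N (Polynomial.C (Lf K N w)) = Lf (Polynomial K) N (fun i => Polynomial.C (w i)) := by
  rw [Lf_apply, Lf_apply, map_sum, map_sum]
  refine Finset.sum_congr rfl fun i _ => ?_
  rw [map_mul, map_mul, exch_C_X, exch_C_C]

/-- 1-genericity on coefficient vectors -/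
def Gen {q : ℕ} (α γ : Fin q → Fin N → K) : Prop :=
  ∀ s t : K, ¬ (s = 0 ∧ t = 0) → LinearIndependent K (fun j => s • α j + t • γ j)

/-- the pencil -/
noncomputable def pen {q : ℕ} (α γ : Fin q → Fin N → K) (j : Fin q) : Fin N → Polynomial K :=
  fun i => Polynomial.C (γ j i) - Polynomial.X * Polynomial.C (α j i)

lemma exch_pen {q : ℕ} (α γ : Fin q → Fin N → K) (j : Fin q) :
    exch K N (Polynomial.C (Lf K N (γ j)) - Polynomial.X * Polynomial.C (Lf K N (α j))) =
      Lf (Polynomial K) N (pen α γ j) := by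
  rw [map_sub, map_mul, exch_X, exch_Lf, exch_Lf, ← MvPolynomial.smul_eq_C_mul, ← map_smul,
    ← map_sub]
  rfl

lemma eval_pen {q : ℕ} (α γ : Fin q → Fin N → K) (g : Fin q → Polynomial K) (r : K) (i : Fin N) :
    ((∑ j, g j • pen α γ j) i).eval r = (∑ j, (g j).eval r • ((-r) • α j + (1:K) • γ j)) i := by
  simp only [Finset.sum_apply, Pi.smul_apply, Pi.add_apply, smul_eq_mul, Polynomial.eval_finsetSum,
    pen, Polynomial.eval_mul, Polynomial.eval_sub, Polynomial.eval_C, Polynomial.eval_X]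
  refine Finset.sum_congr rfl fun j _ => by ring

lemma pen_div {q : ℕ} {α γ : Fin q → Fin N → K} (hG : Gen α γ) (r : K) (w : Fin N → Polynomial K)
    (hw : (Polynomial.X - Polynomial.C r) • w ∈ Submodule.span (Polynomial K) (Set.range (pen α γ))) :
    w ∈ Submodule.span (Polynomial K) (Set.range (pen α γ)) := by
  rw [Submodule.mem_span_range_iff_exists_fun] at hw ⊢
  obtain ⟨g, hg⟩ := hw
  have h0 : ∑ j, (g j).eval r • ((-r) • α j + (1:K) • γ j) = 0 := by
    ext i
    rw [← eval_pen, hg]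
    simp
  have h1 := Fintype.linearIndependent_iff.1 (hG (-r) 1 (by simp)) _ h0
  have h2 : ∀ j, ∃ g', g j = (Polynomial.X - Polynomial.C r) * g' := fun j =>
    Polynomial.dvd_iff_isRoot.2 (h1 j)
  choose g' hg' using h2
  refine ⟨g', ?_⟩
  have h3 : (Polynomial.X - Polynomial.C r) • ∑ j, g' j • pen α γ j =
      (Polynomial.X - Polynomial.C r) • w := by
    rw [← hg, Finset.smul_sum]
    refine Finset.sum_congr rfl fun j _ => by rw [hg' j, mul_smul]
  exact smul_right_injective _ (Polynomial.X_sub_C_ne_zero r) h3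

lemma pen_sat [IsAlgClosed K] {q : ℕ} {α γ : Fin q → Fin N → K} (hG : Gen α γ) (n : ℕ) :
    ∀ (p : Polynomial K) (_ : p.natDegree ≤ n) (_ : p ≠ 0) (w : Fin N → Polynomial K)
    (_ : p • w ∈ Submodule.span (Polynomial K) (Set.range (pen α γ))),
    w ∈ Submodule.span (Polynomial K) (Set.range (pen α γ)) := by
  induction n with
  | zero =>
    intro p hp h0 w hw
    rw [Polynomial.eq_C_of_natDegree_le_zero hp] at hw h0
    have h0 : p.coeff 0 ≠ 0 := fun h => h0 (by rw [h, Polynomial.C_0])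
    have := Submodule.smul_mem _ (Polynomial.C (p.coeff 0)⁻¹) hw
    rwa [smul_smul, ← Polynomial.C_mul, inv_mul_cancel₀ h0, Polynomial.C_1, one_smul] at this
  | succ n ih =>
    intro p hp h0 w hw
    by_cases hd : p.natDegree = 0
    · exact ih p (by omega) h0 w hw
    · obtain ⟨r, hr⟩ := IsAlgClosed.exists_root p
        (fun h => hd (Polynomial.natDegree_eq_of_degree_eq_some h))
      obtain ⟨p', rfl⟩ := Polynomial.dvd_iff_isRoot.2 hr
      have hp' : p' ≠ 0 := right_ne_zero_of_mul h0
      rw [Polynomial.natDegree_mul (Polynomial.X_sub_C_ne_zero r) hp',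
        Polynomial.natDegree_X_sub_C] at hp
      rw [mul_smul] at hw
      exact ih p' (by omega) hp' w (pen_div hG r _ hw)

lemma pen_proj [IsAlgClosed K] {q : ℕ} {α γ : Fin q → Fin N → K} (hG : Gen α γ) :
    Module.Projective (Polynomial K)
      ((Fin N → Polynomial K) ⧸ Submodule.span (Polynomial K) (Set.range (pen α γ))) := by
  have : Module.IsTorsionFree (Polynomial K)
      ((Fin N → Polynomial K) ⧸ Submodule.span (Polynomial K) (Set.range (pen α γ))) := by
    rw [Module.isTorsionFree_iff_smul_eq_zero]
    intro p w hw
    obtain ⟨w, rfl⟩ := Submodule.mkQ_surjective _ w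
    by_cases hp : p = 0
    · exact Or.inl hp
    · right
      rw [Submodule.mkQ_apply, Submodule.Quotient.mk_eq_zero]
      rw [← map_smul, Submodule.mkQ_apply, Submodule.Quotient.mk_eq_zero] at hw
      exact pen_sat hG _ p le_rfl hp w hw
  infer_instance

/-- the ideal of the pencil in `R[t]`. -/
noncomputable def Qi {q : ℕ} (α γ : Fin q → Fin N → K) : Ideal (Polynomial (MvPolynomial (Fin N) K)) :=
  Ideal.span (Set.range fun j =>
    Polynomial.C (Lf K N (γ j)) - Polynomial.X * Polynomial.C (Lf K N (α j)))

lemma Qi_eq {q : ℕ} (α γ : Fin q → Fin N → K) : Qi α γ =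
    Ideal.comap (exch K N) (Ideal.span (Lf (Polynomial K) N ''
      (Submodule.span (Polynomial K) (Set.range (pen α γ)) : Set (Fin N → Polynomial K)))) := by
  rw [span_Lf]
  have : (Set.range fun j => Lf (Polynomial K) N (pen α γ j)) =
      exch K N '' (Set.range fun j =>
    Polynomial.C (Lf K N (γ j)) - Polynomial.X * Polynomial.C (Lf K N (α j))) := by
    rw [← Set.range_comp]
    congr 1
    ext1 j
    exact (exch_pen α γ j).symm
  rw [this, ← Ideal.map_span, Ideal.comap_map_of_bijective _ (exch K N).bijective]
  rfl

lemma Qi_prime [IsAlgClosed K] {q : ℕ} {α γ : Fin q → Fin N → K} (hG : Gen α γ) :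
    (Qi α γ).IsPrime := by
  rw [Qi_eq]
  have := pen_proj hG
  have := (Lf_ideal (Submodule.span (Polynomial K) (Set.range (pen α γ)))).1
  infer_instance

lemma Pm_eq [IsAlgClosed K] {q : ℕ} {α γ : Fin q → Fin N → K} (hG : Gen α γ) :
    Pm (fun j => Lf K N (α j)) (fun j => Lf K N (γ j)) = Ideal.comap Polynomial.C (Qi α γ) := by
  apply le_antisymm
  · rw [Pm, Ideal.span_le]
    rintro _ ⟨⟨i, j⟩, rfl⟩
    simp only [SetLike.mem_coe, Ideal.mem_comap]
    have h : ∀ j, Polynomial.C (Lf K N (γ j)) - Polynomial.X * Polynomial.C (Lf K N (α j)) ∈ Qi α γ :=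
      fun j => Ideal.subset_span ⟨j, rfl⟩
    have := sub_mem (Ideal.mul_mem_left _ (Polynomial.C (Lf K N (α i))) (h j))
      (Ideal.mul_mem_left _ (Polynomial.C (Lf K N (α j))) (h i))
    convert this using 1
    rw [Polynomial.C_sub, Polynomial.C_mul, Polynomial.C_mul]
    ring
  · intro f hf
    obtain ⟨g, hg⟩ := (Ideal.mem_span_range_iff_exists_fun).1 (Ideal.mem_comap.1 hf)
    have hα : LinearIndependent K α := by simpa using hG 1 0 (by simp)
    exact reduce _ _ (koszul_lin q α hα) f (Finset.univ.sup fun j => (g j).natDegree) g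
      (fun j => Finset.le_sup (f := fun j => (g j).natDegree) (Finset.mem_univ j)) hg

lemma Pm_prime [IsAlgClosed K] {q : ℕ} {α γ : Fin q → Fin N → K} (hG : Gen α γ) :
    (Pm (fun j => Lf K N (α j)) (fun j => Lf K N (γ j))).IsPrime := by
  rw [Pm_eq hG]
  have := Qi_prime hG
  infer_instance

lemma Pm_lin {q : ℕ} (α γ : Fin q → Fin N → K) (w : Fin N → K)
    (hw : Lf K N w ∈ Pm (fun j => Lf K N (α j)) (fun j => Lf K N (γ j))) : w = 0 := by
  have h1 : ∀ w, Lf K N w ∈ idealOfVars (Fin N) K := by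
    intro w
    rw [Lf_apply]
    exact sum_mem fun i _ => Ideal.mul_mem_left _ _ (Ideal.subset_span ⟨i, rfl⟩)
  have h2 : Pm (fun j => Lf K N (α j)) (fun j => Lf K N (γ j)) ≤ idealOfVars (Fin N) K ^ 2 := by
    rw [Pm, Ideal.span_le]
    rintro _ ⟨⟨i, j⟩, rfl⟩
    rw [pow_two]
    exact sub_mem (Ideal.mul_mem_mul (h1 _) (h1 _)) (Ideal.mul_mem_mul (h1 _) (h1 _))
  have h3 := (mem_pow_idealOfVars_iff' _ _).1 (h2 hw)
  ext i
  rw [← coeff_Lf w i]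
  exact h3 _ (by simp)

lemma Gen.init {q : ℕ} {α γ : Fin (q+1) → Fin N → K} (hG : Gen α γ) :
    Gen (fun j : Fin q => α j.castSucc) (fun j : Fin q => γ j.castSucc) :=
  fun s t h => li_init (hG s t h)

lemma last_notMem [IsAlgClosed K] {q : ℕ} {α γ : Fin (q+1) → Fin N → K} (hG : Gen α γ) :
    Polynomial.C (Lf K N (γ (Fin.last q))) - Polynomial.X * Polynomial.C (Lf K N (α (Fin.last q)))
     ∉ Qi (fun j : Fin q => α j.castSucc) (fun j : Fin q => γ j.castSucc) := by
  intro h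
  rw [Qi_eq, Ideal.mem_comap, exch_pen] at h
  have := pen_proj hG.init
  have h2 := (Lf_ideal _).2 _ h
  obtain ⟨g, hg⟩ := (Submodule.mem_span_range_iff_exists_fun _).1 h2
  have hγ : LinearIndependent K γ := by simpa using hG 0 1 (by simp)
  apply li_last hγ
  rw [Submodule.mem_span_range_iff_exists_fun]
  refine ⟨fun j => (g j).eval 0, ?_⟩
  ext i
  have := eval_pen (fun j : Fin q => α j.castSucc) (fun j : Fin q => γ j.castSucc) g 0 i
  rw [hg] at this
  simp [pen] at this
  simp [this]

end Scroll

section EN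

lemma en_key {R : Type u} [CommRing R] {q : ℕ} (a c : Fin (q+2) → R) (l : R)
    (hl : l ∈ Ideal.span (Set.range fun j : Fin (q+1) => a j.castSucc)) :
    ∃ p ∈ Pm a c, a 0 * p - (a 0 * c (Fin.last _) - c 0 * a (Fin.last _)) * l ∈
      Pm (fun j : Fin (q+1) => a j.castSucc) (fun j : Fin (q+1) => c j.castSucc) := by
  obtain ⟨r, rfl⟩ := (Ideal.mem_span_range_iff_exists_fun).1 hl
  refine ⟨∑ j : Fin (q+1), r j * (a j.castSucc * c (Fin.last _) - a (Fin.last _) * c j.castSucc),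
    sum_mem fun j _ => Ideal.mul_mem_left _ _ (minor_mem a c _ _), ?_⟩
  rw [Finset.mul_sum, Finset.mul_sum, ← Finset.sum_sub_distrib]
  refine sum_mem fun j _ => ?_
  have := Ideal.mul_mem_left _ (- (r j * a (Fin.last _)))
    (minor_mem (fun j : Fin (q+1) => a j.castSucc) (fun j : Fin (q+1) => c j.castSucc) 0 j)
  convert this using 1
  simp only [Fin.castSucc_zero]
  ring

lemma Pm_init_le {R : Type u} [CommRing R] {q : ℕ} (a c : Fin (q+1) → R) :
    Pm (fun j : Fin q => a j.castSucc) (fun j : Fin q => c j.castSucc) ≤ Pm a c := by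
  rw [Pm, Ideal.span_le]
  rintro _ ⟨⟨i, j⟩, rfl⟩
  exact minor_mem a c _ _

lemma Pm_le_span {R : Type u} [CommRing R] {q : ℕ} (a c : Fin q → R) :
    Pm a c ≤ Ideal.span (Set.range a) := by
  rw [Pm, Ideal.span_le]
  rintro _ ⟨⟨i, j⟩, rfl⟩
  exact sub_mem (Ideal.mul_mem_right _ _ (Ideal.subset_span ⟨i, rfl⟩))
    (Ideal.mul_mem_right _ _ (Ideal.subset_span ⟨j, rfl⟩))

lemma en_step {R : Type u} [CommRing R] {q n : ℕ} (a c : Fin (q+2) → R)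
    (P' : Ideal R)
    (hP' : P' = Pm (fun j : Fin (q+1) => a j.castSucc) (fun j : Fin (q+1) => c j.castSucc))
    (hp : P'.IsPrime) (hx : a 0 ∉ P')
    (hδ : a 0 * c (Fin.last _) - c 0 * a (Fin.last _) ∉ P')
    (h1 : PD R n (R ⧸ P'))
    (h2 : PD R (n+1) (R ⧸ Ideal.span (Set.range fun j : Fin (q+1) => a j.castSucc))) :
    PD R (n+1) (R ⧸ Pm a c) := by
  set δ := a 0 * c (Fin.last _) - c 0 * a (Fin.last _) with hδd
  set L := Ideal.span (Set.range fun j : Fin (q+1) => a j.castSucc) with hL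
  set T := P' ⊔ Ideal.span {δ} * L with hT
  have hkey : ∀ l ∈ L, ∃ p ∈ Pm a c, a 0 * p - δ * l ∈ P' := by
    rw [hP']; exact en_key a c
  have hP'P : P' ≤ Pm a c := by rw [hP']; exact Pm_init_le a c
  have hP'L : P' ≤ L := by rw [hP']; exact Pm_le_span _ _
  have hTmem : ∀ f, f ∈ T → ∃ l ∈ L, f - δ * l ∈ P' := by
    intro f hf
    obtain ⟨p, hp, z, hz, rfl⟩ := Submodule.mem_sup.1 hf
    obtain ⟨l, hl, rfl⟩ := Ideal.mem_span_singleton_mul.1 hz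
    exact ⟨l, hl, by simpa using hp⟩
  have hδL : ∀ l ∈ L, δ * l ∈ T := fun l hl =>
    Ideal.mem_sup_right (Ideal.mul_mem_mul (Ideal.mem_span_singleton_self δ) hl)
  have nz : ∀ z, z ∉ P' → ∀ f, z * f ∈ P' → f ∈ P' := fun z hz f hf =>
    (hp.mem_or_mem hf).resolve_left hz
  have hA : ∀ f, f ∈ L ↔ δ * f ∈ T := by
    intro f
    refine ⟨hδL f, fun hf => ?_⟩
    obtain ⟨l, hl, h⟩ := hTmem _ hf
    rw [← mul_sub] at h
    have := hP'L (nz _ hδ _ h)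
    simpa using add_mem this hl
  have hB : ∀ f, f ∈ Pm a c ↔ a 0 * f ∈ T := by
    intro f
    constructor
    · intro hf
      have hle : Pm a c ≤ Submodule.comap (LinearMap.mulLeft R (a 0)) T := by
        rw [Pm, Ideal.span, Submodule.span_le]
        rintro _ ⟨⟨i, j⟩, rfl⟩
        change a 0 * (a i * c j - a j * c i) ∈ T
        have hcl : ∀ i : Fin (q+1), a 0 * (a i.castSucc * c (Fin.last _)
            - a (Fin.last _) * c i.castSucc) ∈ T := by
          intro i
          have e1 : a i.castSucc ∈ L := Ideal.subset_span ⟨i, rfl⟩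
          have e2 : a 0 * c i.castSucc - a i.castSucc * c 0 ∈ P' := by
            rw [hP']
            exact minor_mem (fun j : Fin (q+1) => a j.castSucc)
              (fun j : Fin (q+1) => c j.castSucc) 0 i
          have e3 : a (Fin.last _) * (a 0 * c i.castSucc - a i.castSucc * c 0) ∈ T :=
            Ideal.mem_sup_left (Ideal.mul_mem_left _ (a (Fin.last _)) e2)
          have := sub_mem (hδL _ e1) e3
          convert this using 1
          rw [hδd]; ring
        induction i using Fin.lastCases with
        | last =>
          induction j using Fin.lastCases with
          | last => simp
          | cast j =>
            have := neg_mem (hcl j)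
            convert this using 1
            ring
        | cast i =>
          induction j using Fin.lastCases with
          | last => exact hcl i
          | cast j =>
            apply Ideal.mul_mem_left
            apply Ideal.mem_sup_left
            rw [hP']
            exact minor_mem (fun j : Fin (q+1) => a j.castSucc)
              (fun j : Fin (q+1) => c j.castSucc) i j
      exact hle hf
    · intro hf
      obtain ⟨l, hl, h⟩ := hTmem _ hf
      obtain ⟨p, hp, h'⟩ := hkey l hl
      have h3 := sub_mem h h'
      have h4 : a 0 * f - δ * l - (a 0 * p - δ * l) = a 0 * (f - p) := by ring
      rw [h4] at h3
      have := hP'P (nz _ hx _ h3)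
      simpa using add_mem this hp
  have hC1 : P' ⊔ Ideal.span {δ} = T ⊔ Ideal.span {δ} := by
    rw [hT, sup_assoc]
    congr 1
    exact (sup_eq_right.2 Ideal.mul_le_left).symm
  have hC2 : P' ⊔ Ideal.span {a 0} = T ⊔ Ideal.span {a 0} := by
    apply le_antisymm
    · exact sup_le_sup_right le_sup_left _
    · refine sup_le ?_ le_sup_right
      intro f hf
      obtain ⟨l, hl, h⟩ := hTmem _ hf
      obtain ⟨p, hp, h'⟩ := hkey l hl
      have h3 := sub_mem h h'
      have h4 : f = (f - δ * l - (a 0 * p - δ * l)) + a 0 * p := by ring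
      rw [h4]
      exact Submodule.add_mem_sup h3 (Ideal.mul_mem_right _ _ (Ideal.mem_span_singleton_self _))
  have t1 : PD R (n+1) (R ⧸ T) := PD.colon₂ hA hC1 h2 (PD.nzd (nz _ hδ) rfl h1)
  exact PD.colon₁ hB hC2 t1 (PD.mono (Nat.le_succ _) (PD.nzd (nz _ hx) rfl h1))

variable {K : Type u} [Field K] {N : ℕ}

lemma PD_Pm [IsAlgClosed K] (q : ℕ) (α γ : Fin (q+1) → Fin N → K) (hG : Gen α γ) :
    PD (MvPolynomial (Fin N) K) q
      (MvPolynomial (Fin N) K ⧸ Pm (fun j => Lf K N (α j)) (fun j => Lf K N (γ j))) := by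
  induction q with
  | zero =>
    have : Pm (fun j => Lf K N (α j)) (fun j => Lf K N (γ j)) = ⊥ := by
      rw [Pm, Ideal.span_eq_bot]
      rintro _ ⟨⟨i, j⟩, rfl⟩
      have : i = j := Fin.ext (by omega)
      subst this
      ring
    rw [this]
    exact PD.bot
  | succ q ih =>
    have hα : LinearIndependent K α := by simpa using hG 1 0 (by simp)
    have hpr := Pm_prime hG.init
    have hQ := Qi_prime hG.init
    have hx : Lf K N (α 0) ∉ Pm (fun j : Fin (q+1) => Lf K N (α j.castSucc))
        (fun j : Fin (q+1) => Lf K N (γ j.castSucc)) := fun h =>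
      hα.ne_zero 0 (Pm_lin _ _ _ h)
    refine en_step (fun j => Lf K N (α j)) (fun j => Lf K N (γ j)) _ rfl hpr hx ?_
      (ih _ _ hG.init) (PD_lin (q+1) (fun j => α j.castSucc) (li_init hα))
    intro h
    have hx' : Polynomial.C (Lf K N (α 0)) ∉
        Qi (fun j : Fin (q+1) => α j.castSucc) (fun j : Fin (q+1) => γ j.castSucc) := by
      intro h'
      apply hx
      rw [Pm_eq hG.init]
      exact h'
    rw [Pm_eq hG.init, Ideal.mem_comap] at h
    have h0 : Polynomial.C (Lf K N (γ 0)) - Polynomial.X * Polynomial.C (Lf K N (α 0)) ∈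
        Qi (fun j : Fin (q+1) => α j.castSucc) (fun j : Fin (q+1) => γ j.castSucc) :=
      Ideal.subset_span ⟨0, rfl⟩
    have h1 := add_mem h (Ideal.mul_mem_left _ (Polynomial.C (Lf K N (α (Fin.last _)))) h0)
    have h2 : Polynomial.C (Lf K N (α 0)) * (Polynomial.C (Lf K N (γ (Fin.last _)))
        - Polynomial.X * Polynomial.C (Lf K N (α (Fin.last _)))) ∈
        Qi (fun j : Fin (q+1) => α j.castSucc) (fun j : Fin (q+1) => γ j.castSucc) := by
      convert h1 using 1
      simp only [Polynomial.C_sub, Polynomial.C_mul]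
      ring
    rcases hQ.mem_or_mem h2 with h3 | h3
    · exact hx' h3
    · exact last_notMem hG h3

end EN

section Main
variable {K : Type u} [Field K] {N : ℕ}

lemma gen_of_oneGeneric {q : ℕ} (α γ : Fin q → Fin N → K)
    (h : OneGeneric K (Matrix.of ![fun j => Lf K N (α j), fun j => Lf K N (γ j)] :
      Matrix (Fin 2) (Fin q) (MvPolynomial (Fin N) K))) : Gen α γ := by
  intro s t hst
  rw [Fintype.linearIndependent_iff]
  intro g hg
  by_contra hne
  have hg0 : g ≠ 0 := fun h0 => hne (fun i => by rw [h0]; rfl)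
  refine h ![s, t] g ?_ hg0 ?_
  · intro h0
    apply hst
    exact ⟨by simpa using congrFun h0 0, by simpa using congrFun h0 1⟩
  · have := congrArg (Lf K N) hg
    rw [map_sum, map_zero] at this
    rw [Fin.sum_univ_two, ← Finset.sum_add_distrib, ← this]
    refine Finset.sum_congr rfl fun j _ => ?_
    simp only [map_smul, map_add, MvPolynomial.smul_eq_C_mul, Matrix.of_apply, Matrix.cons_val_zero,
      Matrix.cons_val_one, MvPolynomial.algebraMap_eq, map_mul]
    ring

lemma span_cons {R : Type u} [CommRing R] {n : ℕ} (z : R) (w : Fin n → R) :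
    Ideal.span (Set.range (Fin.cons z w : Fin (n+1) → R)) =
      Ideal.span {z} ⊔ Ideal.span (Set.range w) := by
  rw [Fin.range_cons, Ideal.span_insert]

lemma main_step {R : Type u} [CommRing R] {m n : ℕ} (a c : Fin (m+1) → R) (b : R) (I : Ideal R)
    (hI : I = Ideal.span {a 0 * b} ⊔
      Ideal.span (Set.range fun j : Fin m => a 0 * c j.succ - c 0 * a j.succ))
    (hp : (Pm a c).IsPrime) (hx : a 0 ∉ Pm a c) (hb : b ∉ Pm a c)
    (hy : ∀ f, c 0 * f ∈ Ideal.span {a 0} → f ∈ Ideal.span {a 0})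
    (h1 : PD R n (R ⧸ Pm a c))
    (h2 : PD R (n+1) (R ⧸ Ideal.span (Set.range a)))
    (h3 : PD R (n+1) (R ⧸ (Ideal.span {a 0} ⊔ Ideal.span {c 0}))) :
    PD R (n+1) (R ⧸ I) := by
  have hgen : ∀ j : Fin (m+1), a 0 * c j - a j * c 0 ∈ I := by
    intro j
    induction j using Fin.cases with
    | zero => rw [sub_self]; exact zero_mem _
    | succ j =>
      rw [hI, mul_comm (a j.succ)]
      exact Ideal.mem_sup_right (Ideal.subset_span ⟨j, rfl⟩)
  have hIb : a 0 * b ∈ I := by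
    rw [hI]; exact Ideal.mem_sup_left (Ideal.mem_span_singleton_self _)
  have hIP : ∀ f ∈ I, ∃ r, f - a 0 * b * r ∈ Pm a c := by
    intro f hf
    rw [hI] at hf
    obtain ⟨z, hz, w, hw, rfl⟩ := Submodule.mem_sup.1 hf
    obtain ⟨r, rfl⟩ := Ideal.mem_span_singleton'.1 hz
    refine ⟨r, ?_⟩
    have e : r * (a 0 * b) + w - a 0 * b * r = w := by ring
    rw [e]
    refine (Ideal.span_le.2 ?_ : Ideal.span _ ≤ Pm a c) hw
    rintro _ ⟨j, rfl⟩
    have := minor_mem a c 0 j.succ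
    rwa [mul_comm (a j.succ)] at this
  have hA : ∀ f, f ∈ Pm a c ⊔ Ideal.span {b} ↔ a 0 * f ∈ I := by
    intro f
    constructor
    · intro hf
      have hle : Pm a c ⊔ Ideal.span {b} ≤ Submodule.comap (LinearMap.mulLeft R (a 0)) I := by
        apply sup_le
        · rw [Pm, Ideal.span, Submodule.span_le]
          rintro _ ⟨⟨i, j⟩, rfl⟩
          change a 0 * (a i * c j - a j * c i) ∈ I
          have := sub_mem (Ideal.mul_mem_left _ (a i) (hgen j)) (Ideal.mul_mem_left _ (a j) (hgen i))
          convert this using 1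
          ring
        · rw [Ideal.span, Submodule.span_le]
          rintro _ rfl
          exact hIb
      exact hle hf
    · intro hf
      obtain ⟨r, hr⟩ := hIP _ hf
      have e : a 0 * f - a 0 * b * r = a 0 * (f - b * r) := by ring
      rw [e] at hr
      have := (hp.mem_or_mem hr).resolve_left hx
      have e2 : f = (f - b * r) + b * r := by ring
      rw [e2]
      exact Submodule.add_mem_sup this (Ideal.mul_mem_right _ _ (Ideal.mem_span_singleton_self _))
  refine PD.colon₂ hA rfl
    (PD.nzd (fun f hf => (hp.mem_or_mem hf).resolve_left hb) rfl h1) ?_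
  have hal : ∀ j, a j ∈ Ideal.span (Set.range a) := fun j => Ideal.subset_span ⟨j, rfl⟩
  have hx1 : Ideal.span {a 0} ≤ Ideal.span (Set.range a) := by
    rw [Ideal.span_singleton_le_iff_mem]; exact hal 0
  have hI2 : ∀ f ∈ I ⊔ Ideal.span {a 0}, ∃ l ∈ Ideal.span (Set.range a),
      f - c 0 * l ∈ Ideal.span {a 0} := by
    intro f hf
    obtain ⟨z, hz, w, hw, rfl⟩ := Submodule.mem_sup.1 hf
    rw [hI] at hz
    obtain ⟨z1, hz1, z2, hz2, rfl⟩ := Submodule.mem_sup.1 hz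
    obtain ⟨r, rfl⟩ := Ideal.mem_span_singleton'.1 hz1
    obtain ⟨g, rfl⟩ := (Ideal.mem_span_range_iff_exists_fun).1 hz2
    obtain ⟨r', rfl⟩ := Ideal.mem_span_singleton'.1 hw
    refine ⟨- ∑ j, g j * a j.succ, neg_mem (sum_mem fun j _ => Ideal.mul_mem_left _ _ (hal _)), ?_⟩
    rw [Ideal.mem_span_singleton']
    refine ⟨r * b + r' + ∑ j, g j * c j.succ, ?_⟩
    have e : ∑ j, g j * (a 0 * c j.succ - c 0 * a j.succ) =
        a 0 * ∑ j, g j * c j.succ - c 0 * ∑ j, g j * a j.succ := by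
      rw [Finset.mul_sum, Finset.mul_sum, ← Finset.sum_sub_distrib]
      exact Finset.sum_congr rfl fun j _ => by ring
    rw [e]
    ring
  have hB : ∀ f, f ∈ Ideal.span (Set.range a) ↔ c 0 * f ∈ I ⊔ Ideal.span {a 0} := by
    intro f
    constructor
    · intro hf
      obtain ⟨g, rfl⟩ := (Ideal.mem_span_range_iff_exists_fun).1 hf
      rw [Finset.mul_sum]
      refine sum_mem fun j _ => ?_
      have e : c 0 * (g j * a j) = (- g j) * (a 0 * c j - a j * c 0) + g j * c j * a 0 := by ring
      rw [e]
      exact Submodule.add_mem_sup (Ideal.mul_mem_left _ _ (hgen j))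
        (Ideal.mul_mem_left _ _ (Ideal.mem_span_singleton_self _))
    · intro hf
      obtain ⟨l, hl, h⟩ := hI2 _ hf
      rw [← mul_sub] at h
      simpa using add_mem (hx1 (hy _ h)) hl
  refine PD.colon₂ hB ?_ h2 h3
  apply le_antisymm
  · exact sup_le_sup_right le_sup_right _
  · refine sup_le (fun f hf => ?_) le_sup_right
    obtain ⟨l, hl, h⟩ := hI2 _ hf
    have e : f = (f - c 0 * l) + c 0 * l := by ring
    rw [e]
    exact Submodule.add_mem_sup h (Ideal.mul_mem_right _ _ (Ideal.mem_span_singleton_self _))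

end Main

/-- with `n = m + 1`, if `I` is minimally generated by `n` quadrics and is
represented by minors by `M = [[x, 0, a₁₂, …, a₁ₙ], [y, a₂₁, a₂₂, …, a₂ₙ]]` (all entries
linear forms or zero, `x, y` linearly independent) whose submatrix `D` obtained by
deleting the second column is 1-generic, then `pd(R/I) ≤ n`. -/
theorem stmt9 (K : Type u) [Field K] [IsAlgClosed K] (N m : ℕ)
    (x y b : MvPolynomial (Fin N) K) (hx : x.IsHomogeneous 1) (hy : y.IsHomogeneous 1)
    (hb : b.IsHomogeneous 1)
    (hxy : LinearIndependent K ![x, y])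
    (u v : Fin m → MvPolynomial (Fin N) K)
    (hu : ∀ j, (u j).IsHomogeneous 1) (hv : ∀ j, (v j).IsHomogeneous 1)
    (I : Ideal (MvPolynomial (Fin N) K))
    (hI : I = repByMinors x y (Fin.cons 0 u) (Fin.cons b v))
    (hmin : ∀ (k : ℕ) (h : Fin k → MvPolynomial (Fin N) K),
      I = Ideal.span (Set.range h) → m + 1 ≤ k)
    (h1g : OneGeneric K (Matrix.of ![Fin.cons x u, Fin.cons y v] : Matrix (Fin 2) (Fin (m + 1)) (MvPolynomial (Fin N) K))) :
    projDim (MvPolynomial (Fin N) K) (MvPolynomial (Fin N) K ⧸ I) ≤ ((m + 1 : ℕ) : ℕ∞) := by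
  obtain ⟨ξ, rfl⟩ := exists_Lf x hx
  obtain ⟨η, rfl⟩ := exists_Lf y hy
  obtain ⟨β, rfl⟩ := exists_Lf b hb
  choose μ hμ using fun j => exists_Lf (u j) (hu j)
  choose ν hν using fun j => exists_Lf (v j) (hv j)
  obtain rfl : u = fun j => Lf K N (μ j) := funext fun j => (hμ j).symm
  obtain rfl : v = fun j => Lf K N (ν j) := funext fun j => (hν j).symm
  clear hμ hν
  have hI' : I = Ideal.span {Lf K N ξ * Lf K N β} ⊔ Ideal.span (Set.range fun j : Fin m =>
      Lf K N ξ * Lf K N (ν j) - Lf K N η * Lf K N (μ j)) := by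
    rw [hI, repByMinors, ← span_cons]
    congr 2
    ext1 j
    induction j using Fin.cases with
    | zero => simp
    | succ j => simp
  have hβ : β ≠ 0 := by
    rintro rfl
    have := hmin m (fun j : Fin m => Lf K N ξ * Lf K N (ν j) - Lf K N η * Lf K N (μ j))
      (by rw [hI']; simp)
    omega
  let α : Fin (m+1) → Fin N → K := Fin.cons ξ μ
  let γ : Fin (m+1) → Fin N → K := Fin.cons η ν
  have hG : Gen α γ := by
    apply gen_of_oneGeneric
    convert h1g using 3
    · ext1 j
      induction j using Fin.cases with
      | zero => rfl
      | succ j => rfl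
    · congr 1
      ext1 j
      induction j using Fin.cases with
      | zero => rfl
      | succ j => rfl
  have hα : LinearIndependent K α := by simpa using hG 1 0 (by simp)
  have hli : LinearIndependent K ![ξ, η] := by
    apply LinearIndependent.of_comp (Lf K N)
    have e : (Lf K N) ∘ ![ξ, η] = ![Lf K N ξ, Lf K N η] := by
      ext1 j
      fin_cases j <;> rfl
    rw [e]
    exact hxy
  have hs1 : (Set.range fun j : Fin 1 => Lf K N (![ξ, η] j.castSucc)) = {Lf K N ξ} := by
    rw [Set.range_unique]; rfl
  have hreg : ∀ f, Lf K N η * f ∈ Ideal.span {Lf K N ξ} → f ∈ Ideal.span {Lf K N ξ} := by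
    intro f hf
    rw [← hs1] at hf ⊢
    exact reg_lin hli f hf
  have hpd1 : PD (MvPolynomial (Fin N) K) 1
      (MvPolynomial (Fin N) K ⧸ Ideal.span {Lf K N ξ}) := by
    rw [← hs1]
    exact PD_lin 1 (fun j : Fin 1 => ![ξ, η] j.castSucc) (li_init hli)
  have key : PD (MvPolynomial (Fin N) K) (m+1) (MvPolynomial (Fin N) K ⧸ I) := by
    by_cases hm : m = 0
    · subst hm
      have hne : Lf K N ξ * Lf K N β ≠ 0 := by
        apply mul_ne_zero
        · intro h
          exact hα.ne_zero 0 (Lf_injective (h.trans (map_zero _).symm))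
        · intro h
          exact hβ (Lf_injective (h.trans (map_zero _).symm))
      have hI2 : I = ⊥ ⊔ Ideal.span {Lf K N ξ * Lf K N β} := by
        rw [hI']; simp
      refine PD.nzd (fun f hf => ?_) hI2 PD.bot
      rw [Ideal.mem_bot] at hf ⊢
      exact (mul_eq_zero.1 hf).resolve_left hne
    · have hpd2 : PD (MvPolynomial (Fin N) K) (m+1)
          (MvPolynomial (Fin N) K ⧸ (Ideal.span {Lf K N ξ} ⊔ Ideal.span {Lf K N η})) :=
        PD.mono (by omega) (PD.nzd hreg rfl hpd1)
      have p1 := Pm_prime hG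
      have p2 : Lf K N ξ ∉ Pm (fun j => Lf K N (α j)) (fun j => Lf K N (γ j)) :=
        fun h => hα.ne_zero 0 (Pm_lin _ _ _ h)
      have p3 : Lf K N β ∉ Pm (fun j => Lf K N (α j)) (fun j => Lf K N (γ j)) :=
        fun h => hβ (Pm_lin _ _ _ h)
      exact main_step (fun j => Lf K N (α j)) (fun j => Lf K N (γ j)) (Lf K N β) I hI'
        p1 p2 p3 hreg (PD_Pm m α γ hG) (PD_lin (m+1) α hα) hpd2
  have key2 := PD.pdLE _ _ key
  exact sInf_le ⟨m+1, key2, rfl⟩
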